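/- (Closure operation Cl(T−) on quiver data, RI case.) Let m, n ∈ ℕ, let S⁺, A⁺ ∈ ℤ^m and S⁻, A⁻ ∈ ℤ^n, and let Q be a symmetric (m+n)×(m+n) integer matrix with blocks Q₊₊ (m×m), Q₊₋ (m×n), Q₋₊ = Q₊₋ᵀ, Q₋₋ (n×n). Write S = (S⁺,S⁻), A = (A⁺,A⁻) ∈ ℤ^{m+n}. Then for every j ∈ ℕ the following identity holds in ℚ(q,a), where for d ∈ ℕ^{m+n} we set k = d₁+⋯+d_m: Σ_{d ∈ ℕ^{m+n}, d₁+⋯+d_{m+n}=j} (−q)^{S·d + (k−j)} · a^{A·d + 2(k−j)} · q^{d·Q·dᵀ + 2(k−j)²} · (q²;q²)_{j−k} · [k; d₁,…,d_m] · [j−k; d_{m+1},…,d_{m+n}] · [j;k]₊ · (a²q^{2−4j+2k};q²)_{j−k} / (q²;q²)_{j−k} = Σ_{e ∈ ℕ^{m+2n}, e₁+⋯+e_{m+2n}=j} (−q)^{S′·e} · a^{A′·e} · q^{e·Q′·eᵀ} · [j; e₁,…,e_{m+2n}], where S′ = (S⁺, S⁻−1, S⁻) ∈ ℤ^{m+2n},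 A′ = (A⁺, A⁻−2, A⁻) ∈ ℤ^{m+2n}, and Q′ is the symmetric (m+2n)×(m+2n) matrix whose 3×3 block decomposition (block sizes m, n, n) has rows [Q₊₊, Q₊₋, Q₊₋−1], [Q₋₊, Q₋₋+2, Q₋₋+L], [Q₋₊−1, Q₋₋+U, Q₋₋−1]. -/

import Mathlib

/-!
The proof expands the Pochhammer symbol on the left. Put `N = j - k = d_{m+1} + ⋯ + d_{m+n}`.
Cutting `(x;q²)_N` into consecutive blocks whose lengths are the negative entries of `d`
(`poch_sum`) and applying the finite `q²`-binomial theorem to each block (`poch_div_qq2`) gives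
`(x;q²)_N / ∏ᵢ (q²;q²)_{d_{m+i}}` as a sum over all splittings `d⁻ = β + α` of
`(-x)^{|α|} q^{⋯} / ∏ᵢ (q²;q²)_{βᵢ} (q²;q²)_{αᵢ}` (`poch_sum_div`). The pairs consisting of `d` and
a splitting of `d⁻` correspond bijectively to the vectors `e = (d⁺, β, α)`, and with
`x = a² q^{2-4j+2k}` the two summands agree: this is a comparison of the exponents of `-q`, `a`
and `q`, the last one resting on `quad_QclRI` and
`∑ αᵢ² + 2 ∑_{i<l} αᵢ αₗ = |α|²` (`sum_sq_add_cross`).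
-/

/-!
STATEMENT 3: The closure operation Cl(T−) on quiver data, RI case
(Lemma of Stošić–Wedrich, knot case).

Setup: `F = ℚ(q,a)` with `qv = q`, `av = a`.
`poch c N = (c;q²)_N`, `qq2 N = (q²;q²)_N`.
Quantum multinomials appear inline as quotients of `qq2`'s.
The index set `ℕ^{m+n}` is modeled as `Fin m ⊕ Fin n → ℕ`, and `S = (S⁺,S⁻)` as
`Sum.elim Sp Sm`.  `QclRI Q` is the 3×3-block matrix (block sizes m, n, n) with rows
`[Q₊₊, Q₊₋, Q₊₋−1]`, `[Q₋₊, Q₋₋+2, Q₋₋+L]`, `[Q₋₊−1, Q₋₋+U, Q₋₋−1]`, where `L` is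
the strictly lower-triangular all-ones matrix (entry `(i,j)` equal to 1 iff `j < i`)
and `U = Lᵀ`.  Exponents like `k − j` are integers, interpreted via `zpow` in `F`.
-/

open Finset

noncomputable section

/-- The field `ℚ(q,a)` of rational functions in two indeterminates over `ℚ`. -/
abbrev F : Type := FractionRing (MvPolynomial (Fin 2) ℚ)

/-- The indeterminate `q`. -/
def qv : F := algebraMap (MvPolynomial (Fin 2) ℚ) F (MvPolynomial.X 0)

/-- The indeterminate `a`. -/
def av : F := algebraMap (MvPolynomial (Fin 2) ℚ) F (MvPolynomial.X 1)

/-- The Pochhammer symbol `(c;q²)_N = ∏_{i=0}^{N-1} (1 - c q^{2i})`. -/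
def poch (c : F) (N : ℕ) : F := ∏ i ∈ Finset.range N, (1 - c * qv ^ (2 * i))

/-- `(q²;q²)_N = ∏_{i=1}^{N} (1 - q^{2i})`. -/
def qq2 (N : ℕ) : F := poch (qv ^ 2) N

/-- The finset of `ι`-tuples of naturals with total sum `N`. -/
def tuples (ι : Type) [Fintype ι] [DecidableEq ι] (N : ℕ) : Finset (ι → ℕ) :=
  (Fintype.piFinset fun _ : ι => Finset.range (N + 1)).filter fun d => ∑ x, d x = N

/-- The matrix `Q′` of the RI closure: block rows
`[Q₊₊, Q₊₋, Q₊₋−1]`, `[Q₋₊, Q₋₋+2, Q₋₋+L]`, `[Q₋₊−1, Q₋₋+U, Q₋₋−1]`. -/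
def QclRI {m n : ℕ} (Q : Matrix (Fin m ⊕ Fin n) (Fin m ⊕ Fin n) ℤ) :
    Matrix (Fin m ⊕ Fin n ⊕ Fin n) (Fin m ⊕ Fin n ⊕ Fin n) ℤ :=
  Matrix.of fun x y =>
    match x, y with
    | Sum.inl i, Sum.inl j => Q (Sum.inl i) (Sum.inl j)
    | Sum.inl i, Sum.inr (Sum.inl j) => Q (Sum.inl i) (Sum.inr j)
    | Sum.inl i, Sum.inr (Sum.inr j) => Q (Sum.inl i) (Sum.inr j) - 1
    | Sum.inr (Sum.inl i), Sum.inl j => Q (Sum.inr i) (Sum.inl j)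
    | Sum.inr (Sum.inl i), Sum.inr (Sum.inl j) => Q (Sum.inr i) (Sum.inr j) + 2
    | Sum.inr (Sum.inl i), Sum.inr (Sum.inr j) => Q (Sum.inr i) (Sum.inr j) + (if j < i then 1 else 0)
    | Sum.inr (Sum.inr i), Sum.inl j => Q (Sum.inr i) (Sum.inl j) - 1
    | Sum.inr (Sum.inr i), Sum.inr (Sum.inl j) => Q (Sum.inr i) (Sum.inr j) + (if i < j then 1 else 0)
    | Sum.inr (Sum.inr i), Sum.inr (Sum.inr j) => Q (Sum.inr i) (Sum.inr j) - 1

/-! ### Nonvanishing and the `q²`-binomial theorem -/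

lemma qv_ne_zero : qv ≠ 0 := by
  unfold qv
  rw [Ne, FaithfulSMul.algebraMap_eq_zero_iff]
  exact MvPolynomial.X_ne_zero _

lemma av_ne_zero : av ≠ 0 := by
  unfold av
  rw [Ne, FaithfulSMul.algebraMap_eq_zero_iff]
  exact MvPolynomial.X_ne_zero _

lemma one_sub_qv_pow_ne_zero (N : ℕ) : 1 - qv ^ (2 * (N + 1)) ≠ 0 := by
  intro h
  have h1 : (MvPolynomial.X 0 : MvPolynomial (Fin 2) ℚ) ^ (2 * (N + 1)) = 1 := by
    apply FaithfulSMul.algebraMap_injective (MvPolynomial (Fin 2) ℚ) F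
    rw [map_pow, map_one]
    exact (sub_eq_zero.mp h).symm
  have h2 := congrArg (MvPolynomial.eval (fun _ => (0 : ℚ))) h1
  simp at h2

lemma qq2_succ (N : ℕ) : qq2 (N + 1) = qq2 N * (1 - qv ^ (2 * (N + 1))) := by
  unfold qq2 poch
  rw [Finset.prod_range_succ]
  ring

lemma qq2_ne_zero (N : ℕ) : qq2 N ≠ 0 := by
  induction N with
  | zero => simp [qq2, poch]
  | succ N ih =>
    rw [qq2_succ]
    exact mul_ne_zero ih (one_sub_qv_pow_ne_zero N)

/-- The term of the `q²`-binomial theorem indexed by `(b, a)`, normalised by `(q²;q²)_{a+b}`: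
`(-x)^a q^{a(a-1)} / ((q²;q²)_b (q²;q²)_a)`. -/
def binomTerm (x : F) (p : ℕ × ℕ) : F :=
  (-x) ^ p.2 * qv ^ (p.2 * (p.2 - 1)) / (qq2 p.1 * qq2 p.2)

lemma binomTerm_succ_left (x : F) (b a : ℕ) :
    (1 - qv ^ (2 * (b + 1))) * binomTerm x (b + 1, a) = binomTerm x (b, a) := by
  have := one_sub_qv_pow_ne_zero b
  have := qq2_ne_zero a
  have := qq2_ne_zero b
  simp only [binomTerm, qq2_succ]
  field_simp

lemma binomTerm_succ_right (x : F) (b a : ℕ) :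
    (1 - qv ^ (2 * (a + 1))) * binomTerm x (b, a + 1) =
      -x * qv ^ (2 * a) * binomTerm x (b, a) := by
  have := one_sub_qv_pow_ne_zero a
  have := qq2_ne_zero a
  have := qq2_ne_zero b
  have h : (a + 1) * (a + 1 - 1) = a * (a - 1) + 2 * a := by
    cases a with
    | zero => rfl
    | succ a => simp only [Nat.add_sub_cancel]; ring
  simp only [binomTerm, qq2_succ, h]
  field_simp
  ring

/-- The finite `q²`-binomial theorem, divided by `(q²;q²)_N`. -/
lemma poch_div_qq2 (x : F) (N : ℕ) :
    poch x N / qq2 N = ∑ p ∈ HasAntidiagonal.antidiagonal N, binomTerm x p := by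
  induction N with
  | zero => simp [poch, qq2, binomTerm]
  | succ N ih =>
    have h1 := one_sub_qv_pow_ne_zero N
    have h2 := qq2_ne_zero N
    apply mul_left_cancel₀ h1
    have hL : (1 - qv ^ (2 * (N + 1))) * (poch x (N + 1) / qq2 (N + 1)) =
        (1 - x * qv ^ (2 * N)) * (poch x N / qq2 N) := by
      rw [qq2_succ, show poch x (N + 1) = poch x N * (1 - x * qv ^ (2 * N)) from
        Finset.prod_range_succ _ _]
      field_simp
    -- `1 - q^{2(a+b)} = (1 - q^{2b}) + q^{2b} (1 - q^{2a})` yields the two Pascal contributions.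
    have hsplit : (1 - qv ^ (2 * (N + 1))) * ∑ p ∈ HasAntidiagonal.antidiagonal (N + 1), binomTerm x p =
        ∑ p ∈ HasAntidiagonal.antidiagonal (N + 1), (1 - qv ^ (2 * p.1)) * binomTerm x p +
        ∑ p ∈ HasAntidiagonal.antidiagonal (N + 1),
          qv ^ (2 * p.1) * ((1 - qv ^ (2 * p.2)) * binomTerm x p) := by
      rw [Finset.mul_sum, ← Finset.sum_add_distrib]
      refine Finset.sum_congr rfl fun p hp => ?_
      rw [← HasAntidiagonal.mem_antidiagonal.mp hp]
      ring
    rw [hL, hsplit, Finset.Nat.sum_antidiagonal_succ, Finset.Nat.sum_antidiagonal_succ',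
      ih]
    simp only [binomTerm_succ_left, binomTerm_succ_right]
    simp only [mul_zero, pow_zero, sub_self, zero_mul, zero_add]
    rw [sub_mul, one_mul, sub_eq_add_neg, Finset.mul_sum, ← Finset.sum_neg_distrib]
    congr 1
    refine Finset.sum_congr rfl fun p hp => ?_
    rw [← HasAntidiagonal.mem_antidiagonal.mp hp]
    ring

/-! ### Block decomposition of Pochhammer symbols -/

lemma poch_add (x : F) (a b : ℕ) :
    poch x (a + b) = poch x a * poch (x * qv ^ (2 * a)) b := by
  unfold poch
  rw [Finset.prod_range_add]
  congr 1
  refine Finset.prod_congr rfl fun i _ => ?_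
  ring

/-- Splitting `(x;q²)_{d₁+⋯+dₙ}` into blocks of lengths `dₙ, …, d₁`, from the last index to the
first: this order produces the strictly lower-triangular matrix `L` in the closure. -/
lemma poch_sum (x : F) {n : ℕ} (d : Fin n → ℕ) :
    poch x (∑ i, d i) =
      ∏ i, poch (x * qv ^ (2 * ∑ l, if i < l then d l else 0)) (d i) := by
  induction n with
  | zero => simp [poch]
  | succ n ih =>
    rw [Fin.sum_univ_succ, add_comm, poch_add, ih, Fin.prod_univ_succ, mul_comm]
    simp [Fin.sum_univ_succ]

lemma poch_sum_div (x : F) {n : ℕ} (d : Fin n → ℕ) :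
    poch x (∑ i, d i) / ∏ i, qq2 (d i) =
      ∑ p ∈ Fintype.piFinset fun i => HasAntidiagonal.antidiagonal (d i),
        ∏ i, binomTerm (x * qv ^ (2 * ∑ l, if i < l then d l else 0)) (p i) := by
  rw [poch_sum, ← Finset.prod_div_distrib, ← Finset.prod_univ_sum]
  exact Finset.prod_congr rfl fun i _ => poch_div_qq2 _ _

/-! ### Index tuples and exponents -/

lemma mem_tuples {ι : Type} [Fintype ι] [DecidableEq ι] {N : ℕ} {d : ι → ℕ} :
    d ∈ tuples ι N ↔ ∑ x, d x = N := by
  unfold tuples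
  rw [Finset.mem_filter, and_iff_right_iff_imp, Fintype.mem_piFinset]
  rintro rfl x
  rw [Finset.mem_range, Nat.lt_succ_iff]
  exact Finset.single_le_sum (fun _ _ => Nat.zero_le _) (Finset.mem_univ x)

/-- The square of a sum, with the off-diagonal part collected over `i < l`. -/
lemma sum_sq_add_cross {n : ℕ} (f : Fin n → ℤ) :
    ∑ i, f i * f i + 2 * ∑ i, ∑ l, (if i < l then f i * f l else 0) = (∑ i, f i) ^ 2 := by
  induction n with
  | zero => simp
  | succ n ih =>
    have := ih fun i => f i.succ
    simp only [Fin.sum_univ_succ, Fin.succ_lt_succ_iff, Fin.succ_pos, if_true,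
      Fin.not_lt_zero, if_false, zero_add, ← Finset.mul_sum]
    linear_combination this

/-- Collects the powers in a product of binomial terms; integer exponents avoid the truncated
subtraction in `α(α-1)`. -/
lemma prod_binomTerm (c : F) {n : ℕ} (p : Fin n → ℕ × ℕ) (w : Fin n → ℕ) :
    ∏ i, binomTerm (c * qv ^ (2 * w i)) (p i) =
      (-c) ^ (∑ i, (p i).2) *
        qv ^ (∑ i, (2 * (w i : ℤ) * (p i).2 + (p i).2 * (p i).2 - (p i).2)) *
        (∏ i, (qq2 (p i).1 * qq2 (p i).2))⁻¹ := by
  have hz : ∀ f : Fin n → ℤ, qv ^ (∑ i, f i) = ∏ i, qv ^ f i := by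
    intro f
    induction (Finset.univ : Finset (Fin n)) using Finset.induction_on with
    | empty => simp
    | insert a s ha ih => rw [Finset.sum_insert ha, Finset.prod_insert ha, zpow_add₀ qv_ne_zero, ih]
  rw [hz, ← Finset.prod_pow_eq_pow_sum, ← Finset.prod_inv_distrib, ← Finset.prod_mul_distrib,
    ← Finset.prod_mul_distrib]
  refine Finset.prod_congr rfl fun i _ => ?_
  have hn : (((p i).2 * ((p i).2 - 1) : ℕ) : ℤ) = (p i).2 * (p i).2 - (p i).2 := by
    cases (p i).2 with
    | zero => simp
    | succ a => push_cast [Nat.add_sub_cancel]; ring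
  have hq : qv ^ (2 * (w i : ℤ) * (p i).2 + (p i).2 * (p i).2 - (p i).2) =
      (qv ^ (2 * w i)) ^ (p i).2 * qv ^ ((p i).2 * ((p i).2 - 1)) := by
    rw [add_sub_assoc, ← hn, zpow_add₀ qv_ne_zero, zpow_natCast, ← pow_mul, ← zpow_natCast qv (_ * _ * _)]
    push_cast
    rfl
  rw [hq, binomTerm, div_eq_mul_inv, ← neg_mul, mul_pow]
  ring

/-- The quadratic form of the closed-up quiver matrix in terms of the original one, for
`e = (γ, β, α)` and `d = (γ, α + β)`. -/
lemma quad_QclRI {m n : ℕ} (Q : Matrix (Fin m ⊕ Fin n) (Fin m ⊕ Fin n) ℤ)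
    (e : Fin m ⊕ Fin n ⊕ Fin n → ℤ) (d : Fin m ⊕ Fin n → ℤ)
    (hd1 : ∀ i, d (Sum.inl i) = e (Sum.inl i))
    (hd2 : ∀ i, d (Sum.inr i) = e (Sum.inr (Sum.inl i)) + e (Sum.inr (Sum.inr i))) :
    ∑ x, ∑ y, e x * QclRI Q x y * e y =
      ∑ x, ∑ y, d x * Q x y * d y + 2 * (∑ i, e (Sum.inr (Sum.inl i))) ^ 2
        - (∑ i, e (Sum.inr (Sum.inr i))) ^ 2
        - 2 * (∑ i, e (Sum.inl i)) * (∑ i, e (Sum.inr (Sum.inr i)))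
        + 2 * ∑ i, ∑ l, (if i < l then
            e (Sum.inr (Sum.inr i)) * e (Sum.inr (Sum.inl l)) else 0) := by
  have hswap : ∑ i, ∑ l, (if l < i then
        e (Sum.inr (Sum.inl i)) * e (Sum.inr (Sum.inr l)) else 0) =
      ∑ i, ∑ l, (if i < l then
        e (Sum.inr (Sum.inr i)) * e (Sum.inr (Sum.inl l)) else 0) := by
    rw [Finset.sum_comm]
    simp only [mul_comm]
  have hbb : (∑ i, e (Sum.inr (Sum.inl i))) ^ 2 =
      ∑ i, ∑ l, e (Sum.inr (Sum.inl i)) * e (Sum.inr (Sum.inl l)) := by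
    rw [pow_two, Finset.sum_mul_sum]
  have haa : (∑ i, e (Sum.inr (Sum.inr i))) ^ 2 =
      ∑ i, ∑ l, e (Sum.inr (Sum.inr i)) * e (Sum.inr (Sum.inr l)) := by
    rw [pow_two, Finset.sum_mul_sum]
  have hca : (∑ i, e (Sum.inl i)) * (∑ i, e (Sum.inr (Sum.inr i))) =
      ∑ i, ∑ l, e (Sum.inl i) * e (Sum.inr (Sum.inr l)) := by
    rw [Finset.sum_mul_sum]
  have hac : (∑ i, e (Sum.inl i)) * (∑ i, e (Sum.inr (Sum.inr i))) =
      ∑ i, ∑ l, e (Sum.inr (Sum.inr i)) * e (Sum.inl l) := by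
    rw [mul_comm, Finset.sum_mul_sum]
  simp only [Fintype.sum_sum_type, hd1, hd2, QclRI, Matrix.of_apply, mul_add, add_mul, mul_sub,
    sub_mul, mul_ite, ite_mul, mul_one, mul_zero, zero_mul, mul_two, Finset.sum_add_distrib,
    Finset.sum_sub_distrib]
  linear_combination hswap - 2 * hbb + haa + hca + hac

/-! ### Comparison of summands -/

/-- The summand of the right-hand side at `e = (e⁺, β, α)`. -/
def rhsTerm {m n : ℕ} (Q : Matrix (Fin m ⊕ Fin n) (Fin m ⊕ Fin n) ℤ)
    (Sp Ap : Fin m → ℤ) (Sm Am : Fin n → ℤ) (j : ℕ) (e : Fin m ⊕ Fin n ⊕ Fin n → ℕ) : F :=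
  (-qv) ^ (∑ x, Sum.elim Sp (Sum.elim (fun i => Sm i - 1) Sm) x * (e x : ℤ)) *
    av ^ (∑ x, Sum.elim Ap (Sum.elim (fun i => Am i - 2) Am) x * (e x : ℤ)) *
    qv ^ (∑ x, ∑ y, (e x : ℤ) * QclRI Q x y * (e y : ℤ)) *
    (qq2 j / ∏ x, qq2 (e x))

/-- One summand of the left-hand side, expanded over all splittings `p` of the negative part
of `d`. Each resulting term is the right-hand summand at `e = (d⁺, p.1, p.2)`. -/
lemma lhs_term_expand {m n : ℕ}
    (Q : Matrix (Fin m ⊕ Fin n) (Fin m ⊕ Fin n) ℤ)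
    (Sp Ap : Fin m → ℤ) (Sm Am : Fin n → ℤ) (j : ℕ) (d : Fin m ⊕ Fin n → ℕ)
    (hd : d ∈ tuples (Fin m ⊕ Fin n) j) (k : ℕ) (hk : k = ∑ i, d (Sum.inl i)) :
    (-qv) ^ ((∑ x, Sum.elim Sp Sm x * (d x : ℤ)) + ((k : ℤ) - (j : ℤ))) *
          av ^ ((∑ x, Sum.elim Ap Am x * (d x : ℤ)) + 2 * ((k : ℤ) - (j : ℤ))) *
          qv ^ ((∑ x, ∑ y, (d x : ℤ) * Q x y * (d y : ℤ)) + 2 * ((k : ℤ) - (j : ℤ)) ^ 2) *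
          qq2 (j - k) *
          (qq2 k / ∏ i, qq2 (d (Sum.inl i))) *
          (qq2 (j - k) / ∏ i, qq2 (d (Sum.inr i))) *
          (qq2 j / (qq2 k * qq2 (j - k))) *
          (poch (av ^ 2 * qv ^ ((2 : ℤ) - 4 * (j : ℤ) + 2 * (k : ℤ))) (j - k) / qq2 (j - k)) =
      ∑ p ∈ Fintype.piFinset fun i => HasAntidiagonal.antidiagonal (d (Sum.inr i)),
        rhsTerm Q Sp Ap Sm Am j (Sum.elim (fun i => d (Sum.inl i))
          (Sum.elim (fun i => (p i).1) (fun i => (p i).2))) := by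
  rw [mem_tuples, Fintype.sum_sum_type] at hd
  have hjk : j - k = ∑ i, d (Sum.inr i) := by omega
  have hj : (j : ℤ) = k + ∑ i, (d (Sum.inr i) : ℤ) := by
    rw [← hd]; rw [hk]; push_cast; rfl
  have key := poch_sum_div (av ^ 2 * qv ^ ((2 : ℤ) - 4 * (j : ℤ) + 2 * (k : ℤ)))
    fun i => d (Sum.inr i)
  rw [← hjk] at key
  have h1 := qq2_ne_zero (j - k)
  have h2 := qq2_ne_zero k
  calc _ = (-qv) ^ ((∑ x, Sum.elim Sp Sm x * (d x : ℤ)) + ((k : ℤ) - (j : ℤ))) *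
          av ^ ((∑ x, Sum.elim Ap Am x * (d x : ℤ)) + 2 * ((k : ℤ) - (j : ℤ))) *
          qv ^ ((∑ x, ∑ y, (d x : ℤ) * Q x y * (d y : ℤ)) + 2 * ((k : ℤ) - (j : ℤ)) ^ 2) *
          (qq2 j / ∏ i, qq2 (d (Sum.inl i))) *
          (poch (av ^ 2 * qv ^ ((2 : ℤ) - 4 * (j : ℤ) + 2 * (k : ℤ))) (j - k) /
            ∏ i, qq2 (d (Sum.inr i))) := by
        have h3 : ∏ i, qq2 (d (Sum.inl i)) ≠ 0 := Finset.prod_ne_zero_iff.mpr fun i _ => qq2_ne_zero _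
        have h4 : ∏ i, qq2 (d (Sum.inr i)) ≠ 0 := Finset.prod_ne_zero_iff.mpr fun i _ => qq2_ne_zero _
        generalize (-qv) ^ ((∑ x, Sum.elim Sp Sm x * (d x : ℤ)) + ((k : ℤ) - (j : ℤ))) = A
        generalize av ^ ((∑ x, Sum.elim Ap Am x * (d x : ℤ)) + 2 * ((k : ℤ) - (j : ℤ))) = B
        generalize qv ^ ((∑ x, ∑ y, (d x : ℤ) * Q x y * (d y : ℤ)) + 2 * ((k : ℤ) - (j : ℤ)) ^ 2) = C
        generalize poch _ _ = D
        field_simp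
    _ = _ := by
        rw [key, Finset.mul_sum]
        refine Finset.sum_congr rfl fun p hp => ?_
        rw [Fintype.mem_piFinset] at hp
        simp only [HasAntidiagonal.mem_antidiagonal] at hp
        rw [prod_binomTerm]
        have hpd : ∀ i, (d (Sum.inr i) : ℤ) = (p i).1 + (p i).2 := fun i => by
          rw [← hp i]; push_cast; rfl
        set e : Fin m ⊕ Fin n ⊕ Fin n → ℕ := Sum.elim (fun i => d (Sum.inl i))
          (Sum.elim (fun i => (p i).1) (fun i => (p i).2)) with he
        have hquad := quad_QclRI Q (fun x => (e x : ℤ)) (fun x => (d x : ℤ)) (fun i => rfl) hpd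
        have hcross := sum_sq_add_cross fun i => ((p i).2 : ℤ)
        -- `(-c)^α` with `c = a² q^s` is rewritten as `(-q)^α a^{2α} q^{(s-1)α}`.
        have hneg : ∀ N : ℕ, (-(av ^ 2 * qv ^ ((2 : ℤ) - 4 * (j : ℤ) + 2 * (k : ℤ)))) ^ N =
            (-qv) ^ (N : ℤ) * av ^ (2 * (N : ℤ)) *
              qv ^ (((1 : ℤ) - 4 * (j : ℤ) + 2 * (k : ℤ)) * N) := by
          intro N
          rw [zpow_mul, zpow_mul, zpow_natCast, zpow_natCast, zpow_natCast, ← mul_pow, ← mul_pow]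
          congr 1
          rw [show (2 : ℤ) - 4 * (j : ℤ) + 2 * (k : ℤ) = 1 + (1 - 4 * (j : ℤ) + 2 * (k : ℤ)) by ring,
            zpow_add₀ qv_ne_zero, zpow_one]
          norm_cast
          ring
        have hS : (∑ x, Sum.elim Sp (Sum.elim (fun i => Sm i - 1) Sm) x * (e x : ℤ)) =
            (∑ x, Sum.elim Sp Sm x * (d x : ℤ)) + ((k : ℤ) - (j : ℤ)) +
              ((∑ i, (p i).2 : ℕ) : ℤ) := by
          rw [hj]
          simp only [he, Fintype.sum_sum_type, Sum.elim_inl, Sum.elim_inr, hpd, mul_add, sub_mul,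
            one_mul, Finset.sum_add_distrib, Finset.sum_sub_distrib]
          push_cast
          ring
        have hA : (∑ x, Sum.elim Ap (Sum.elim (fun i => Am i - 2) Am) x * (e x : ℤ)) =
            (∑ x, Sum.elim Ap Am x * (d x : ℤ)) + 2 * ((k : ℤ) - (j : ℤ)) +
              2 * ((∑ i, (p i).2 : ℕ) : ℤ) := by
          rw [hj]
          simp only [he, Fintype.sum_sum_type, Sum.elim_inl, Sum.elim_inr, hpd, mul_add, sub_mul,
            Finset.sum_add_distrib, Finset.sum_sub_distrib, ← Finset.mul_sum]
          push_cast
          ring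
        have hE : (∑ x, ∑ y, (e x : ℤ) * QclRI Q x y * (e y : ℤ)) =
            (∑ x, ∑ y, (d x : ℤ) * Q x y * (d y : ℤ)) + 2 * ((k : ℤ) - (j : ℤ)) ^ 2 +
            ((1 : ℤ) - 4 * (j : ℤ) + 2 * (k : ℤ)) * ((∑ i, (p i).2 : ℕ) : ℤ) +
            ∑ i, (2 * ((∑ l, if i < l then d (Sum.inr l) else 0 : ℕ) : ℤ) * (p i).2 +
              (p i).2 * (p i).2 - (p i).2) := by
          have hT : ∑ i, 2 * ((∑ l, if i < l then d (Sum.inr l) else 0 : ℕ) : ℤ) * (p i).2 =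
              2 * (∑ i, ∑ l, if i < l then ((p i).2 : ℤ) * (p l).1 else 0) +
              2 * (∑ i, ∑ l, if i < l then ((p i).2 : ℤ) * (p l).2 else 0) := by
            simp only [Finset.mul_sum, ← Finset.sum_add_distrib]
            refine Finset.sum_congr rfl fun i _ => ?_
            rw [Nat.cast_sum, Finset.mul_sum, Finset.sum_mul]
            refine Finset.sum_congr rfl fun l _ => ?_
            split_ifs
            · rw [hpd]; ring
            · simp
          have hke : ∑ i, (e (Sum.inl i) : ℤ) = k := by simp [he, hk]
          simp only [hke] at hquad
          rw [hquad, Finset.sum_sub_distrib, Finset.sum_add_distrib, hT, hj]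
          simp only [hpd, Finset.sum_add_distrib]
          simp only [he, Sum.elim_inl, Sum.elim_inr]
          push_cast
          linear_combination -hcross
        have hprod : ∏ x, qq2 (e x) =
            (∏ i, qq2 (d (Sum.inl i))) * ∏ i, (qq2 (p i).1 * qq2 (p i).2) := by
          simp only [he, Fintype.prod_sum_type, Sum.elim_inl, Sum.elim_inr,
            Finset.prod_mul_distrib]
        rw [rhsTerm, hS, hA, hE, hprod, hneg]
        generalize (∑ x, Sum.elim Sp Sm x * (d x : ℤ)) + ((k : ℤ) - (j : ℤ)) = s
        generalize (∑ x, Sum.elim Ap Am x * (d x : ℤ)) + 2 * ((k : ℤ) - (j : ℤ)) = t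
        generalize (∑ x, ∑ y, (d x : ℤ) * Q x y * (d y : ℤ)) + 2 * ((k : ℤ) - (j : ℤ)) ^ 2 = u
        rw [zpow_add₀ (neg_ne_zero.mpr qv_ne_zero), zpow_add₀ av_ne_zero, zpow_add₀ qv_ne_zero,
          zpow_add₀ qv_ne_zero, div_eq_mul_inv, div_eq_mul_inv, mul_inv]
        ring

theorem statement3 (m n : ℕ)
    (Q : Matrix (Fin m ⊕ Fin n) (Fin m ⊕ Fin n) ℤ) (hQ : Q.IsSymm)
    (Sp Ap : Fin m → ℤ) (Sm Am : Fin n → ℤ) (j : ℕ) :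
    (∑ d ∈ tuples (Fin m ⊕ Fin n) j,
      (let k : ℕ := ∑ i, d (Sum.inl i);
        (-qv) ^ ((∑ x, Sum.elim Sp Sm x * (d x : ℤ)) + ((k : ℤ) - (j : ℤ))) *
          av ^ ((∑ x, Sum.elim Ap Am x * (d x : ℤ)) + 2 * ((k : ℤ) - (j : ℤ))) *
          qv ^ ((∑ x, ∑ y, (d x : ℤ) * Q x y * (d y : ℤ)) + 2 * ((k : ℤ) - (j : ℤ)) ^ 2) *
          qq2 (j - k) *
          (qq2 k / ∏ i, qq2 (d (Sum.inl i))) *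
          (qq2 (j - k) / ∏ i, qq2 (d (Sum.inr i))) *
          (qq2 j / (qq2 k * qq2 (j - k))) *
          (poch (av ^ 2 * qv ^ ((2 : ℤ) - 4 * (j : ℤ) + 2 * (k : ℤ))) (j - k) / qq2 (j - k)))) =
      ∑ e ∈ tuples (Fin m ⊕ Fin n ⊕ Fin n) j,
        (-qv) ^
            (∑ x, Sum.elim Sp (Sum.elim (fun i => Sm i - 1) Sm) x * (e x : ℤ)) *
          av ^ (∑ x, Sum.elim Ap (Sum.elim (fun i => Am i - 2) Am) x * (e x : ℤ)) *
          qv ^ (∑ x, ∑ y, (e x : ℤ) * QclRI Q x y * (e y : ℤ)) *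
          (qq2 j / ∏ x, qq2 (e x)) := by
  refine (Finset.sum_congr rfl fun d hd =>
    lhs_term_expand Q Sp Ap Sm Am j d hd _ rfl).trans ?_
  rw [Finset.sum_sigma']
  refine Finset.sum_bij' (fun s _ => Sum.elim (fun i => s.1 (Sum.inl i))
      (Sum.elim (fun i => (s.2 i).1) (fun i => (s.2 i).2)))
    (fun e _ => ⟨Sum.elim (fun i => e (Sum.inl i))
        (fun i => e (Sum.inr (Sum.inl i)) + e (Sum.inr (Sum.inr i))),
      fun i => (e (Sum.inr (Sum.inl i)), e (Sum.inr (Sum.inr i)))⟩) ?_ ?_ ?_ ?_ ?_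
  · rintro ⟨d, p⟩ h
    simp only [Finset.mem_sigma, mem_tuples, Fintype.mem_piFinset, HasAntidiagonal.mem_antidiagonal] at h
    rw [mem_tuples, ← h.1]
    simp only [Fintype.sum_sum_type, Sum.elim_inl, Sum.elim_inr, ← Finset.sum_add_distrib, h.2]
  · intro e h
    rw [mem_tuples] at h
    simp only [Finset.mem_sigma, mem_tuples, Fintype.mem_piFinset, HasAntidiagonal.mem_antidiagonal]
    refine ⟨?_, fun i => rfl⟩
    rw [← h]
    simp only [Fintype.sum_sum_type, Sum.elim_inl, Sum.elim_inr, ← Finset.sum_add_distrib]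
  · rintro ⟨d, p⟩ h
    simp only [Finset.mem_sigma, Fintype.mem_piFinset, HasAntidiagonal.mem_antidiagonal] at h
    refine Sigma.ext ?_ (heq_of_eq rfl)
    funext x
    rcases x with i | i
    · rfl
    · exact h.2 i
  · intro e _
    funext x
    rcases x with i | i | i <;> rfl
  · intro s _
    rfl

end
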